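/- Let $M$ be a finitely generated module over $\mathbb{Z}_p$ with an endomorphism $\gamma$ such that $1$ is not a multiple root of the minimal polynomial of $\gamma$ on $M \otimes \mathbb{Q}_p$. Let $f : \ker(1-\gamma) \to \operatorname{coker}(1-\gamma)$ be the natural map and let $a_1, \dots, a_n$ be the eigenvalues of $\gamma$ on $M \otimes_{\mathbb{Z}_p} \overline{\mathbb{Q}}_p$ counted with multiplicity. Then $f$ has finite kernel and cokernel and $\frac{\#\ker f}{\#\operatorname{coker} f} = \left| \prod_{a_i \neq 1} (1 - a_i) \right|_p$, where $|\cdot|_p$ is the $p$-adic absolute value extended to $\overline{\mathbb{Q}}_p$ (normalized by $|p|_p = 1/p$). -/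

import Mathlib

/-!
Write `N = 1 - γ`, let `I = N M`, and let `g : I → I` be the restriction of `N`. Then
`ker f = ker N ∩ I = ker g`, and `N` induces an isomorphism of `coker f = M / (ker N + I)` with
`I / N I = coker g`. So `f` may be replaced by `g`.

With `φ = γ ⊗ ℚ_p`, the module `I` spans the range `W` of `1 - φ`, and `g` extends to the
restriction `G` of `1 - φ` to `W`. The hypothesis on the minimal polynomial says that `G` is
injective (`apply_eq_zero_of_not_sq_dvd_minpoly`). As `φ` is the identity on the quotient by `W`,
its eigenvalues different from `1` are exactly those of its restriction to `W`, whence `det G` is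
the product of the `1 - a` over these (`det_restrict_eq_prod_roots`).

It remains to see that `#ker g / #coker g = |det G|` whenever `g` becomes invertible over `ℚ_p`
(`finite_and_card_ker_div_card_quotient`). The torsion of `I` is finite and contributes the factor
`1` by a snake lemma argument (`finite_and_card_ker_mul_card_quotient`); on the free quotient, the
claim is the Smith normal form (`finite_and_card_quotient_range`).
-/

open Polynomial
open scoped Classical

theorem finite_and_card_quotient_span {p : ℕ} [Fact p.Prime] {a : ℤ_[p]} (ha : a ≠ 0) :
    Finite (ℤ_[p] ⧸ Ideal.span {a}) ∧ (Nat.card (ℤ_[p] ⧸ Ideal.span {a}) : ℝ) = ‖a‖⁻¹ := by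
  have h : Ideal.span {a} = RingHom.ker (PadicInt.toZModPow a.valuation : ℤ_[p] →+* _) := by
    rw [PadicInt.ker_toZModPow, Ideal.span_singleton_eq_span_singleton]
    conv_lhs => rw [PadicInt.unitCoeff_spec ha]
    exact associated_unit_mul_left _ _ (Units.isUnit _)
  have e : ℤ_[p] ⧸ Ideal.span {a} ≃+* ZMod (p ^ a.valuation) :=
    (Ideal.quotEquivOfEq h).trans
      (RingHom.quotientKerEquivOfSurjective (ZMod.ringHom_surjective _))
  have : NeZero (p ^ a.valuation) := ⟨pow_ne_zero _ (Fact.out : p.Prime).ne_zero⟩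
  refine ⟨Finite.of_equiv _ e.symm.toEquiv, ?_⟩
  rw [Nat.card_congr e.toEquiv, Nat.card_zmod, PadicInt.norm_eq_zpow_neg_valuation ha]
  simp

/-- The index of the image of an injective endomorphism of a `ℤ_p`-lattice is the inverse `p`-adic
absolute value of its determinant; a consequence of the Smith normal form. -/
theorem finite_and_card_quotient_range {p : ℕ} [Fact p.Prime] {L : Type*} [AddCommGroup L]
    [Module ℤ_[p] L] [Module.Finite ℤ_[p] L] [Module.Free ℤ_[p] L] (h : Module.End ℤ_[p] L)
    (hdet : LinearMap.det h ≠ 0) :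
    Finite (L ⧸ LinearMap.range h) ∧
      (Nat.card (L ⧸ LinearMap.range h) : ℝ) = ‖LinearMap.det h‖⁻¹ := by
  have hinj : Function.Injective h := by
    rw [← LinearMap.ker_eq_bot]
    by_contra hk
    exact hdet (LinearMap.det_eq_zero_iff_ker_ne_bot.mpr hk)
  have hr : Module.finrank ℤ_[p] (LinearMap.range h) = Module.finrank ℤ_[p] L :=
    LinearMap.finrank_range_of_inj hinj
  let b := Module.Free.chooseBasis ℤ_[p] L
  let a := Submodule.smithNormalFormCoeffs b hr
  let b' := Submodule.smithNormalFormTopBasis b hr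
  let c := Submodule.smithNormalFormBotBasis b hr
  have ha : ∀ i, a i ≠ 0 := Submodule.smithNormalFormCoeffs_ne_zero b hr
  have e := Submodule.quotientEquivPiSpan (LinearMap.range h) b hr
  have hfin : ∀ i, Finite (ℤ_[p] ⧸ Ideal.span {a i}) := fun i =>
    (finite_and_card_quotient_span (ha i)).1
  -- Up to an automorphism of `L`, the map `h` is diagonal with entries `a i`.
  have hassoc : Associated (LinearMap.det h) (∏ i, a i) := by
    rw [← Matrix.det_diagonal, ← LinearMap.det_toLin b']
    let u : L ≃ₗ[ℤ_[p]] L :=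
      (b'.equiv c (Equiv.refl _)).trans (LinearEquiv.ofInjective h hinj).symm
    refine (LinearMap.associated_det_of_eq_comp u _ _ fun x => ?_).symm
    have : Matrix.toLin b' b' (Matrix.diagonal a) = h ∘ₗ (u : L →ₗ[ℤ_[p]] L) := by
      refine b'.ext fun i => ?_
      have h1 : h (u (b' i)) = (c i : L) := by
        have := LinearEquiv.ofInjective_apply (h := hinj) h (u (b' i))
        rw [← this]
        simp [u]
      rw [LinearMap.comp_apply, LinearEquiv.coe_coe, h1]
      rw [Submodule.smithNormalFormBotBasis_def]
      simp [Matrix.toLin_self, Matrix.diagonal_apply, a, b']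
    rw [this]; rfl
  refine ⟨Finite.of_equiv _ e.symm.toEquiv, ?_⟩
  obtain ⟨u, hu⟩ := hassoc
  have hn : ‖LinearMap.det h‖ = ∏ i, ‖a i‖ := by
    rw [← norm_prod, ← hu, norm_mul, PadicInt.norm_units, mul_one]
  rw [hn, Nat.card_congr e.toEquiv, Nat.card_pi, ← Finset.prod_inv_distrib]
  push_cast
  exact Finset.prod_congr rfl fun i _ => (finite_and_card_quotient_span (ha i)).2

theorem finite_of_isTorsion {p : ℕ} [Fact p.Prime] {T : Type*} [AddCommGroup T]
    [Module ℤ_[p] T] [Module.Finite ℤ_[p] T] (hT : Module.IsTorsion ℤ_[p] T) : Finite T := by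
  obtain ⟨ι, _, q, hq, e, ⟨l⟩⟩ := Module.equiv_directSum_of_isTorsion hT
  have : ∀ i, Finite (ℤ_[p] ⧸ Submodule.span ℤ_[p] {q i ^ e i}) := fun i =>
    (finite_and_card_quotient_span (pow_ne_zero (e i) (hq i).ne_zero)).1
  have : Finite (DirectSum ι fun i => ℤ_[p] ⧸ (Submodule.span ℤ_[p] {q i ^ e i})) :=
    Finite.of_equiv _ DFinsupp.equivFunOnFintype.symm
  exact Finite.of_equiv _ l.symm.toEquiv

section
variable {R A B : Type*} [CommRing R] [AddCommGroup A] [Module R A] [AddCommGroup B] [Module R B]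

theorem card_ker_mul_card_range (f : A →ₗ[R] B) :
    Nat.card (LinearMap.ker f) * Nat.card (LinearMap.range f) = Nat.card A := by
  rw [Submodule.card_eq_card_quotient_mul_card (LinearMap.ker f),
    Nat.card_congr f.quotKerEquivRange.toEquiv]

/-- The snake lemma for `0 → T → A → A ⧸ T → 0` and an endomorphism `g`, with `T` finite and the
induced map on `A ⧸ T` injective: as the kernel and the cokernel of `g` on the finite group `T` have
the same order, only the cokernel on `A ⧸ T` contributes to the quotient of orders. -/
theorem finite_and_card_ker_mul_card_quotient (g : Module.End R A) (T : Submodule R A) [Finite T]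
    (hT : T ≤ T.comap g) (hinj : Function.Injective (T.mapQ T g hT))
    (hfin : Finite ((A ⧸ T) ⧸ LinearMap.range (T.mapQ T g hT))) :
    Finite (LinearMap.ker g) ∧ Finite (A ⧸ LinearMap.range g) ∧
    Nat.card (LinearMap.ker g) * Nat.card ((A ⧸ T) ⧸ LinearMap.range (T.mapQ T g hT)) =
      Nat.card (A ⧸ LinearMap.range g) := by
  have hmem : ∀ x, g x ∈ T → x ∈ T := fun x hx => by
    rw [← Submodule.Quotient.mk_eq_zero] at hx ⊢
    apply hinj
    rw [map_zero, ← hx]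
    rfl
  have hker : LinearMap.ker g ≤ T := fun x hx => hmem x (by
    rw [LinearMap.mem_ker.mp hx]; exact T.zero_mem)
  let f₁ : T →ₗ[R] A ⧸ LinearMap.range g := (LinearMap.range g).mkQ ∘ₗ T.subtype
  let f₂ : T →ₗ[R] A := g ∘ₗ T.subtype
  have e₂ : LinearMap.ker f₂ ≃ LinearMap.ker g :=
    { toFun := fun x => ⟨x.1.1, x.2⟩
      invFun := fun x => ⟨⟨x.1, hker x.2⟩, x.2⟩
      left_inv := fun _ => rfl
      right_inv := fun _ => rfl }
  have h₁ : (LinearMap.ker f₁).map T.subtype = LinearMap.range f₂ := by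
    ext x
    simp only [Submodule.mem_map, LinearMap.mem_ker, LinearMap.mem_range, f₁, f₂,
      LinearMap.comp_apply, Submodule.mkQ_apply, Submodule.Quotient.mk_eq_zero]
    constructor
    · rintro ⟨t, ⟨y, hy⟩, rfl⟩
      exact ⟨⟨y, hmem y (by rw [hy]; exact t.2)⟩, hy⟩
    · rintro ⟨t, rfl⟩
      exact ⟨⟨g t, hT t.2⟩, ⟨t, rfl⟩, rfl⟩
  have e₁ : LinearMap.ker f₁ ≃ LinearMap.range f₂ :=
    ((Submodule.equivMapOfInjective T.subtype T.injective_subtype _).trans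
      (LinearEquiv.ofEq _ _ h₁)).toEquiv
  -- The cokernel of `f₁` and the cokernel of the induced map on `A ⧸ T` are both the
  -- quotient of `A` by `range g ⊔ T`.
  let q₁ : A →ₗ[R] (A ⧸ LinearMap.range g) ⧸ LinearMap.range f₁ :=
    (LinearMap.range f₁).mkQ ∘ₗ (LinearMap.range g).mkQ
  let q₂ : A →ₗ[R] (A ⧸ T) ⧸ LinearMap.range (T.mapQ T g hT) :=
    (LinearMap.range (T.mapQ T g hT)).mkQ ∘ₗ T.mkQ
  have hq : LinearMap.ker q₁ = LinearMap.ker q₂ := by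
    have k₁ : LinearMap.ker q₁ = LinearMap.range g ⊔ T := by
      rw [LinearMap.ker_comp, Submodule.ker_mkQ, LinearMap.range_comp, Submodule.range_subtype,
        Submodule.comap_map_mkQ]
    have k₂ : LinearMap.ker q₂ = T ⊔ LinearMap.range g := by
      rw [LinearMap.ker_comp, Submodule.ker_mkQ, Submodule.range_mapQ,
        Submodule.comap_map_mkQ]
    rw [k₁, k₂, sup_comm]
  have e : ((A ⧸ LinearMap.range g) ⧸ LinearMap.range f₁) ≃
      ((A ⧸ T) ⧸ LinearMap.range (T.mapQ T g hT)) :=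
    ((q₁.quotKerEquivOfSurjective
        ((Submodule.mkQ_surjective _).comp (Submodule.mkQ_surjective _))).symm.trans
      ((Submodule.quotEquivOfEq _ _ hq).trans (q₂.quotKerEquivOfSurjective
        ((Submodule.mkQ_surjective _).comp (Submodule.mkQ_surjective _))))).toEquiv
  have hf1 : Finite (LinearMap.range f₁) := by
    exact Set.finite_range f₁
  have hf2 : Finite ((A ⧸ LinearMap.range g) ⧸ LinearMap.range f₁) := Finite.of_equiv _ e.symm
  have c₁ := card_ker_mul_card_range f₁
  have c₂ := card_ker_mul_card_range f₂
  have hf2' : Finite (LinearMap.range f₂) := Set.finite_range f₂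
  rw [Nat.card_congr e₁] at c₁
  rw [Nat.card_congr e₂, mul_comm, ← c₁] at c₂
  have hcard := Nat.eq_of_mul_eq_mul_left Nat.card_pos c₂
  refine ⟨Finite.of_equiv _ e₂, finite_iff_addSubgroup_quotient
    (LinearMap.range f₁).toAddSubgroup |>.mpr ⟨hf1, hf2⟩, ?_⟩
  rw [Submodule.card_eq_card_quotient_mul_card (LinearMap.range f₁), Nat.card_congr e, hcard,
    mul_comm]
end

/-- The determinant of an endomorphism of a free module is unchanged by passing to the fraction
field, for any model `W` of the localization. -/
theorem det_eq_of_isLocalizedModule {R K L W : Type*} [CommRing R] [IsDomain R] [Field K]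
    [Algebra R K] [IsFractionRing R K] [AddCommGroup L] [Module R L] [Module.Free R L]
    [Module.Finite R L] [AddCommGroup W] [Module R W] [Module K W] [IsScalarTower R K W]
    (j : L →ₗ[R] W) [IsLocalizedModule (nonZeroDivisors R) j] (h : Module.End R L)
    (H : Module.End K W) (hH : ∀ x, H (j x) = j (h x)) :
    LinearMap.det H = algebraMap R K (LinearMap.det h) := by
  have hb : IsBaseChange K j := IsLocalizedModule.isBaseChange (nonZeroDivisors R) K j
  rw [← LinearMap.det_baseChange, ← LinearMap.det_conj (h.baseChange K) hb.equiv]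
  congr 1
  refine hb.algHom_ext _ _ fun x => ?_
  simp [hb.equiv_symm_apply, hb.equiv_tmul, hH]

/-- The case of an endomorphism `g` of a finitely generated `ℤ_p`-module `A` that becomes an
automorphism `G` of `W = A ⊗ ℚ_p`: torsion does not affect the quotient of orders, and on the
lattice `A` modulo torsion it is given by the determinant. -/
theorem finite_and_card_ker_div_card_quotient {p : ℕ} [Fact p.Prime] {A W : Type*}
    [AddCommGroup A] [Module ℤ_[p] A] [Module.Finite ℤ_[p] A] [AddCommGroup W] [Module ℤ_[p] W]
    [Module ℚ_[p] W] [IsScalarTower ℤ_[p] ℚ_[p] W] (j : A →ₗ[ℤ_[p]] W)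
    [IsLocalizedModule (nonZeroDivisors ℤ_[p]) j] (g : Module.End ℤ_[p] A)
    (G : Module.End ℚ_[p] W) (hG : ∀ x, G (j x) = j (g x)) (hdet : LinearMap.det G ≠ 0) :
    Finite (LinearMap.ker g) ∧ Finite (A ⧸ LinearMap.range g) ∧
    (Nat.card (LinearMap.ker g) : ℝ) / Nat.card (A ⧸ LinearMap.range g) =
      ‖LinearMap.det G‖ := by
  let T := Submodule.torsion ℤ_[p] A
  have hT : T ≤ T.comap g := by
    intro x hx
    obtain ⟨a, ha⟩ := (Submodule.mem_torsion_iff x).mp hx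
    refine (Submodule.mem_torsion_iff _).mpr ⟨a, ?_⟩
    rw [Submonoid.smul_def] at ha ⊢
    rw [← map_smul, ha, map_zero]
  have : Finite T := finite_of_isTorsion Submodule.torsion_isTorsion
  have : Module.Free ℤ_[p] (A ⧸ T) := inferInstance
  have hj : T ≤ LinearMap.ker j := by
    intro x hx
    obtain ⟨a, ha⟩ := (Submodule.mem_torsion_iff x).mp hx
    rw [LinearMap.mem_ker, ← map_zero j,
      IsLocalizedModule.eq_iff_exists (nonZeroDivisors ℤ_[p]) j]
    exact ⟨a, by rw [ha, smul_zero]⟩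
  let j' : (A ⧸ T) →ₗ[ℤ_[p]] W := T.liftQ j hj
  have hj' : IsLocalizedModule (nonZeroDivisors ℤ_[p]) j' := by
    refine ⟨IsLocalizedModule.map_units j, fun y => ?_, fun {x₁ x₂} => ?_⟩
    · obtain ⟨⟨x, s⟩, h⟩ := IsLocalizedModule.surj (nonZeroDivisors ℤ_[p]) j y
      exact ⟨⟨T.mkQ x, s⟩, h⟩
    · obtain ⟨x₁, rfl⟩ := T.mkQ_surjective x₁
      obtain ⟨x₂, rfl⟩ := T.mkQ_surjective x₂
      intro h
      obtain ⟨c, hc⟩ := IsLocalizedModule.exists_of_eq (S := nonZeroDivisors ℤ_[p]) (f := j) h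
      refine ⟨c, ?_⟩
      rw [Submonoid.smul_def] at hc ⊢
      rw [Submonoid.smul_def, ← map_smul, ← map_smul]
      exact congrArg _ hc
  let h := T.mapQ T g hT
  have hd : LinearMap.det G = algebraMap ℤ_[p] ℚ_[p] (LinearMap.det h) := by
    refine det_eq_of_isLocalizedModule j' h G fun x => ?_
    obtain ⟨x, rfl⟩ := T.mkQ_surjective x
    exact hG x
  have hdh : LinearMap.det h ≠ 0 := fun h0 => hdet (by rw [hd, h0, map_zero])
  have hinj : Function.Injective h := by
    rw [← LinearMap.ker_eq_bot]
    by_contra hk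
    exact hdh (LinearMap.det_eq_zero_iff_ker_ne_bot.mpr hk)
  obtain ⟨hfin, hcard⟩ := finite_and_card_quotient_range h hdh
  obtain ⟨f₁, f₂, e⟩ := finite_and_card_ker_mul_card_quotient g T hT hinj hfin
  refine ⟨f₁, f₂, ?_⟩
  rw [← e, Nat.cast_mul, hcard, hd]
  have h0 : (Nat.card (LinearMap.ker g) : ℝ) ≠ 0 := Nat.cast_ne_zero.mpr Nat.card_pos.ne'
  have h1 : ‖LinearMap.det h‖ ≠ 0 := norm_ne_zero_iff.mpr hdh
  have h2 : ‖algebraMap ℤ_[p] ℚ_[p] (LinearMap.det h)‖ = ‖LinearMap.det h‖ := rfl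
  rw [h2]
  field_simp

/-- Since `φ` induces the identity on the quotient by the range of `1 - φ`, its characteristic
polynomial differs from that of its restriction to this range by a power of `X - 1`. -/
theorem charpoly_eq_charpoly_restrict_mul {K V : Type*} [Field K] [Infinite K] [AddCommGroup V]
    [Module K V] [FiniteDimensional K V] (φ : Module.End K V)
    (hW : LinearMap.range (1 - φ) ≤ (LinearMap.range (1 - φ)).comap φ) :
    φ.charpoly = (φ.restrict hW).charpoly *
      (X - 1) ^ Module.finrank K (V ⧸ LinearMap.range (1 - φ)) := by
  refine Polynomial.funext fun t => ?_
  set W := LinearMap.range (1 - φ) with hWdef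
  have hW' : W ≤ W.comap (algebraMap K (Module.End K V) t - φ) := fun x hx => by
    simpa [Module.algebraMap_end_apply] using W.sub_mem (W.smul_mem t hx) (hW hx)
  rw [eval_mul, LinearMap.eval_charpoly, LinearMap.eval_charpoly,
    LinearMap.det_eq_det_mul_det W _ hW']
  congr 1
  have : W.mapQ W (algebraMap K (Module.End K V) t - φ) hW' = (t - 1) • LinearMap.id := by
    refine W.linearMap_qext (LinearMap.ext fun x => ?_)
    simp only [LinearMap.comp_apply, Submodule.mkQ_apply, Submodule.mapQ_apply,
      LinearMap.smul_apply, LinearMap.id_apply]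
    rw [← Submodule.Quotient.mk_smul, Submodule.Quotient.eq]
    refine ⟨x, ?_⟩
    simp [Module.algebraMap_end_apply, sub_smul]
  rw [this, LinearMap.det_smul]
  simp
  rfl

/-- If `1` is not a multiple root of the minimal polynomial of `φ`, then `1 - φ` is injective on
its own range. -/
theorem apply_eq_zero_of_not_sq_dvd_minpoly {K V : Type*} [Field K] [AddCommGroup V]
    [Module K V] (φ : Module.End K V)
    (hmin : ¬ ((X - 1) ^ 2 ∣ minpoly K φ)) (v : V) (hv : (1 - φ) ((1 - φ) v) = 0) :
    (1 - φ) v = 0 := by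
  have h0 : aeval φ (minpoly K φ) = 0 := minpoly.aeval K φ
  have hirr : Irreducible (X - 1 : K[X]) := by simpa using irreducible_X_sub_C (1 : K)
  have haev : aeval φ (X - 1 : K[X]) = φ - 1 := by simp
  have hv' : (φ - 1) ((φ - 1) v) = 0 := by
    rw [← neg_sub 1 φ, LinearMap.neg_apply, LinearMap.neg_apply, map_neg, hv, neg_zero, neg_zero]
  suffices h : (φ - 1) v = 0 by
    rw [← neg_sub φ 1, LinearMap.neg_apply, h, neg_zero]
  -- Write the minimal polynomial as `r` or `(X - 1) * r` with `r` prime to `X - 1`.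
  obtain ⟨r, hr, hcop⟩ : ∃ r : K[X], aeval φ (r * (X - 1)) = 0 ∧ IsCoprime r (X - 1) := by
    by_cases hd : (X - 1) ∣ minpoly K φ
    · obtain ⟨r, hr⟩ := hd
      refine ⟨r, by rw [mul_comm, ← hr, h0], (hirr.coprime_iff_not_dvd.mpr fun ⟨s, hs⟩ => ?_).symm⟩
      exact hmin ⟨s, by rw [hr, hs]; ring⟩
    · exact ⟨minpoly K φ, by rw [map_mul, h0, zero_mul],
        (hirr.coprime_iff_not_dvd.mpr hd).symm⟩
  obtain ⟨a, b, hab⟩ := hcop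
  have : (φ - 1) v = aeval φ a (aeval φ (r * (X - 1)) v) + aeval φ b ((φ - 1) ((φ - 1) v)) := by
    have := congrArg (fun q : K[X] => aeval φ (q * (X - 1)) v) hab
    simp only [one_mul, add_mul, map_add, map_mul, haev, LinearMap.add_apply,
      Module.End.mul_apply] at this ⊢
    exact this.symm
  rw [this, hr, hv']
  simp

/-- When `1 - φ` is invertible on its own range, the restriction of `φ` to this range does not have
the eigenvalue `1`, and its eigenvalues are those of `φ` different from `1`. So the determinant of
`1 - φ` there, the value at `1` of the characteristic polynomial, is the product of `1 - a` over them. -/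
theorem det_restrict_eq_prod_roots {K V : Type*} [Field K] [Infinite K] [AddCommGroup V] [Module K V]
    [FiniteDimensional K V] (φ : Module.End K V)
    (hW : LinearMap.range (1 - φ) ≤ (LinearMap.range (1 - φ)).comap φ)
    (hdet : LinearMap.det (1 - φ.restrict hW) ≠ 0) :
    algebraMap K (AlgebraicClosure K) (LinearMap.det (1 - φ.restrict hW)) =
      ((((φ.charpoly.map (algebraMap K (AlgebraicClosure K))).roots).filter (· ≠ 1)).map
        (fun a => 1 - a)).prod := by
  set q := (φ.restrict hW).charpoly with hq
  have hq1 : q.eval 1 = LinearMap.det (1 - φ.restrict hW) := by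
    rw [hq, LinearMap.eval_charpoly, map_one]
  have hqm : (q.map (algebraMap K (AlgebraicClosure K))).Monic :=
    (LinearMap.charpoly_monic _).map _
  have hX : (X - 1 : (AlgebraicClosure K)[X]).Monic := by
    simpa using monic_X_sub_C (1 : AlgebraicClosure K)
  have hXr : (X - 1 : (AlgebraicClosure K)[X]).roots = {1} := by
    simpa using roots_X_sub_C (1 : AlgebraicClosure K)
  rw [charpoly_eq_charpoly_restrict_mul φ hW, Polynomial.map_mul, Polynomial.map_pow,
    Polynomial.map_sub, map_X, Polynomial.map_one, roots_mul (hqm.mul (hX.pow _)).ne_zero,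
    roots_pow, hXr, Multiset.filter_add]
  have h1 : Multiset.filter (· ≠ (1 : AlgebraicClosure K))
      (Module.finrank K (V ⧸ LinearMap.range (1 - φ)) • {1}) = 0 := by
    rw [Multiset.filter_eq_nil]
    intro a ha
    simpa using Multiset.mem_of_mem_nsmul ha
  have h2 : Multiset.filter (· ≠ (1 : AlgebraicClosure K))
      (q.map (algebraMap K (AlgebraicClosure K))).roots =
      (q.map (algebraMap K (AlgebraicClosure K))).roots := by
    rw [Multiset.filter_eq_self]
    rintro a ha rfl
    rw [mem_roots hqm.ne_zero, IsRoot.def, eval_one_map, hq1] at ha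
    exact hdet (by simpa using ha)
  rw [h1, h2, add_zero, ← hq1, ← eval_one_map]
  exact (IsAlgClosed.splits _).eval_eq_prod_roots_of_monic hqm 1

/-- Milne–Ramachandran Lemma 5.1: `z(f) = |∏_{aᵢ ≠ 1} (1 - aᵢ)|_p`, where the
`aᵢ` are the eigenvalues of `γ` on `M ⊗ 𝔔̄_p` with multiplicity. -/
theorem stmt_18 (p : ℕ) [Fact p.Prime]
    (M : Type*) [AddCommGroup M] [Module ℤ_[p] M] [Module.Finite ℤ_[p] M]
    (γ : M →ₗ[ℤ_[p]] M)
    (hmin : ¬ ((X - 1) ^ 2 ∣ minpoly ℚ_[p]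
      (LinearMap.baseChange ℚ_[p] γ :
        Module.End ℚ_[p] (TensorProduct ℤ_[p] ℚ_[p] M))))
    (f : LinearMap.ker ((1 : Module.End ℤ_[p] M) - γ) →ₗ[ℤ_[p]]
          M ⧸ LinearMap.range ((1 : Module.End ℤ_[p] M) - γ))
    (hf : f = (LinearMap.range ((1 : Module.End ℤ_[p] M) - γ)).mkQ.comp
          (LinearMap.ker ((1 : Module.End ℤ_[p] M) - γ)).subtype)
    -- the eigenvalues of `γ` on `M ⊗ 𝔔̄_p`, with algebraic multiplicity
    (roots : Multiset (AlgebraicClosure ℚ_[p]))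
    (hroots : roots = ((LinearMap.charpoly (LinearMap.baseChange ℚ_[p] γ)).map
      (algebraMap ℚ_[p] (AlgebraicClosure ℚ_[p]))).roots)
    -- `∏_{aᵢ ≠ 1} (1 - aᵢ)` lies in `ℚ_p`
    (c : ℚ_[p])
    (hc : algebraMap ℚ_[p] (AlgebraicClosure ℚ_[p]) c =
      ((roots.filter (· ≠ 1)).map (fun a => 1 - a)).prod) :
    Finite (LinearMap.ker f) ∧
    Finite ((M ⧸ LinearMap.range ((1 : Module.End ℤ_[p] M) - γ)) ⧸
      LinearMap.range f) ∧
    (Nat.card (LinearMap.ker f) : ℝ) /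
        (Nat.card ((M ⧸ LinearMap.range ((1 : Module.End ℤ_[p] M) - γ)) ⧸
          LinearMap.range f)) = ‖c‖ := by
  subst hf
  generalize hN : (1 : Module.End ℤ_[p] M) - γ = N
  let φ : Module.End ℚ_[p] (TensorProduct ℤ_[p] ℚ_[p] M) := LinearMap.baseChange ℚ_[p] γ
  have hW : LinearMap.range (1 - φ) ≤ (LinearMap.range (1 - φ)).comap φ := by
    rintro _ ⟨v, rfl⟩
    exact ⟨φ v, by simp⟩
  let G : Module.End ℚ_[p] (LinearMap.range (1 - φ)) := 1 - φ.restrict hW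
  have hGval : ∀ w, (G w : TensorProduct ℤ_[p] ℚ_[p] M) = (1 - φ) w := fun w => rfl
  have hdet : LinearMap.det G ≠ 0 := by
    rw [Ne, LinearMap.det_eq_zero_iff_ker_ne_bot, not_not, LinearMap.ker_eq_bot']
    rintro ⟨_, v, rfl⟩ hw
    have := congrArg Subtype.val hw
    rw [hGval] at this
    exact Subtype.ext (apply_eq_zero_of_not_sq_dvd_minpoly φ hmin v this)
  have hcG : LinearMap.det G = c := by
    apply (algebraMap ℚ_[p] (AlgebraicClosure ℚ_[p])).injective
    rw [hc, hroots]
    exact det_restrict_eq_prod_roots φ hW hdet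
  let ι : M →ₗ[ℤ_[p]] TensorProduct ℤ_[p] ℚ_[p] M := TensorProduct.mk ℤ_[p] ℚ_[p] M 1
  have hιN : ∀ m, ι (N m) = (1 - φ) (ι m) := fun m => by
    simp [ι, φ, ← hN, TensorProduct.tmul_sub]
  have hι : IsLocalizedModule (nonZeroDivisors ℤ_[p]) ι :=
    (isLocalizedModule_iff_isBaseChange (nonZeroDivisors ℤ_[p]) ℚ_[p] ι).mpr
      (TensorProduct.isBaseChange _ _ _)
  let j : LinearMap.range N →ₗ[ℤ_[p]] LinearMap.range (1 - φ) :=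
    LinearMap.restrict (q := (LinearMap.range (1 - φ)).restrictScalars ℤ_[p]) ι (by
      rintro _ ⟨m, rfl⟩
      exact ⟨ι m, (hιN m).symm⟩)
  have hj : IsLocalizedModule (nonZeroDivisors ℤ_[p]) j := by
    refine ⟨fun s => ?_, fun y => ?_, fun {x₁ x₂} h => ?_⟩
    · have hs : algebraMap ℤ_[p] ℚ_[p] s ≠ 0 := by
        simp
      rw [Module.End.isUnit_iff]
      constructor
      · intro a b hab
        have hab' : (s : ℤ_[p]) • a = (s : ℤ_[p]) • b := hab
        rw [← algebraMap_smul ℚ_[p], ← algebraMap_smul ℚ_[p] (s : ℤ_[p]) b] at hab'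
        exact smul_right_injective _ hs hab'
      · intro b
        refine ⟨(algebraMap ℤ_[p] ℚ_[p] s)⁻¹ • b, ?_⟩
        rw [Module.algebraMap_end_apply, ← algebraMap_smul ℚ_[p], smul_inv_smul₀ hs]
    · obtain ⟨_, v, rfl⟩ := y
      obtain ⟨⟨m, s⟩, h⟩ := IsLocalizedModule.surj (nonZeroDivisors ℤ_[p]) ι v
      refine ⟨⟨⟨N m, m, rfl⟩, s⟩, Subtype.ext ?_⟩
      have h' : (s : ℤ_[p]) • v = ι m := h
      change (s : ℤ_[p]) • (1 - φ) v = ι (N m)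
      rw [hιN, ← h', ← algebraMap_smul ℚ_[p] (s : ℤ_[p]) v, map_smul, algebraMap_smul]
    · obtain ⟨s, hs⟩ := IsLocalizedModule.exists_of_eq (S := nonZeroDivisors ℤ_[p]) (f := ι)
        (congrArg Subtype.val h)
      exact ⟨s, Subtype.ext hs⟩
  let g : Module.End ℤ_[p] (LinearMap.range N) := N.restrict fun x _ => ⟨x, rfl⟩
  have hGg : ∀ x, G (j x) = j (g x) := fun x => Subtype.ext (hιN x).symm
  obtain ⟨h₁, h₂, h₃⟩ := finite_and_card_ker_div_card_quotient j g G hGg hdet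
  let f := (LinearMap.range N).mkQ ∘ₗ (LinearMap.ker N).subtype
  have e₁ : LinearMap.ker g ≃ LinearMap.ker f :=
    { toFun := fun x => ⟨⟨x.1.1, congrArg Subtype.val x.2⟩,
        (Submodule.Quotient.mk_eq_zero _).mpr x.1.2⟩
      invFun := fun x => ⟨⟨x.1.1, (Submodule.Quotient.mk_eq_zero _).mp x.2⟩,
        Subtype.ext x.1.2⟩
      left_inv := fun _ => rfl
      right_inv := fun _ => rfl }
  -- Both cokernels are the quotient of `M` by `ker N ⊔ range N`.
  let q₁ : M →ₗ[ℤ_[p]] LinearMap.range N ⧸ LinearMap.range g :=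
    (LinearMap.range g).mkQ ∘ₗ N.rangeRestrict
  let q₂ : M →ₗ[ℤ_[p]] (M ⧸ LinearMap.range N) ⧸ LinearMap.range f :=
    (LinearMap.range f).mkQ ∘ₗ (LinearMap.range N).mkQ
  have hq : LinearMap.ker q₁ = LinearMap.ker q₂ := by
    have k₁ : LinearMap.range g = (LinearMap.range N).map N.rangeRestrict := by
      ext y
      constructor
      · rintro ⟨x, rfl⟩
        exact ⟨x.1, x.2, rfl⟩
      · rintro ⟨x, hx, rfl⟩
        exact ⟨⟨x, hx⟩, rfl⟩
    rw [LinearMap.ker_comp, Submodule.ker_mkQ, k₁, Submodule.comap_map_eq,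
      LinearMap.ker_rangeRestrict, LinearMap.ker_comp, Submodule.ker_mkQ,
      LinearMap.range_comp, Submodule.range_subtype, Submodule.comap_map_mkQ]
  have e₂ : (LinearMap.range N ⧸ LinearMap.range g) ≃
      ((M ⧸ LinearMap.range N) ⧸ LinearMap.range f) :=
    ((q₁.quotKerEquivOfSurjective
        ((Submodule.mkQ_surjective _).comp N.surjective_rangeRestrict)).symm.trans
      ((Submodule.quotEquivOfEq _ _ hq).trans (q₂.quotKerEquivOfSurjective
        ((Submodule.mkQ_surjective _).comp (Submodule.mkQ_surjective _))))).toEquiv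
  refine ⟨Finite.of_equiv _ e₁, Finite.of_equiv _ e₂, ?_⟩
  rw [← Nat.card_congr e₁, ← Nat.card_congr e₂, h₃, hcG]
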